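/- Let V ∈ ℝ^{d×ρ} and V_B ∈ ℝ^{d×ρ_B} each have orthonormal columns, and suppose the column space of V is contained in the column space of V_B. Then for every matrix R ∈ ℝ^{d×r}, ‖I_ρ − V^T R R^T V‖₂ ≤ ‖I_{ρ_B} − V_B^T R R^T V_B‖₂. -/

import Mathlib

open Matrix

/-- Euclidean norm of a vector in ℝ^n. -/
noncomputable def euclNorm {n : ℕ} (x : Fin n → ℝ) : ℝ := Real.sqrt (∑ i, x i ^ 2)

/-- Spectral norm (ℓ₂ operator norm) of a real matrix: the supremum of `‖A x‖₂`
over unit vectors `x`. -/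
noncomputable def specNorm {m n : ℕ} (A : Matrix (Fin m) (Fin n) ℝ) : ℝ :=
  sSup {c : ℝ | ∃ x : Fin n → ℝ, euclNorm x = 1 ∧ c = euclNorm (A.mulVec x)}

lemma euclNorm_eq_sqrt_dot {n : ℕ} (x : Fin n → ℝ) : euclNorm x = Real.sqrt (x ⬝ᵥ x) := by
  simp [euclNorm, dotProduct, sq]

lemma euclNorm_eq_norm {n : ℕ} (x : Fin n → ℝ) : euclNorm x = ‖WithLp.toLp 2 x‖ := by
  simp [euclNorm, EuclideanSpace.norm_eq]

open scoped Matrix.Norms.L2Operator in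
lemma bddAbove_specNorm {m n : ℕ} (A : Matrix (Fin m) (Fin n) ℝ) :
    BddAbove {c : ℝ | ∃ x : Fin n → ℝ, euclNorm x = 1 ∧ c = euclNorm (A.mulVec x)} := by
  refine ⟨‖A‖, ?_⟩
  rintro c ⟨x, hx, rfl⟩
  have h := Matrix.l2_opNorm_mulVec A (WithLp.toLp 2 x)
  rw [← euclNorm_eq_norm x, hx, mul_one] at h
  rw [euclNorm_eq_norm]
  exact h

lemma dot_mulVec_self {m n : ℕ} (W : Matrix (Fin m) (Fin n) ℝ) (hW : Wᵀ * W = 1)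
    (x : Fin n → ℝ) : (W *ᵥ x) ⬝ᵥ (W *ᵥ x) = x ⬝ᵥ x := by
  rw [dotProduct_mulVec, vecMul_mulVec, hW, vecMul_one]

lemma dot_transpose_le {m n : ℕ} (W : Matrix (Fin m) (Fin n) ℝ) (hW : Wᵀ * W = 1)
    (y : Fin m → ℝ) : (Wᵀ *ᵥ y) ⬝ᵥ (Wᵀ *ᵥ y) ≤ y ⬝ᵥ y := by
  have h0 : 0 ≤ (y - W *ᵥ (Wᵀ *ᵥ y)) ⬝ᵥ (y - W *ᵥ (Wᵀ *ᵥ y)) :=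
    Finset.sum_nonneg fun i _ => mul_self_nonneg _
  have h1 : y ⬝ᵥ (W *ᵥ (Wᵀ *ᵥ y)) = (Wᵀ *ᵥ y) ⬝ᵥ (Wᵀ *ᵥ y) := by
    rw [dotProduct_mulVec, mulVec_transpose]
  rw [sub_dotProduct, dotProduct_sub, dotProduct_sub, dot_mulVec_self W hW,
    dotProduct_comm (W *ᵥ (Wᵀ *ᵥ y)) y, h1] at h0
  linarith

/-- If `V ∈ ℝ^{d×ρ}` and `V_B ∈ ℝ^{d×ρ_B}` have orthonormal columns and the column
space of `V` is contained in that of `V_B`, then for every `R ∈ ℝ^{d×r}`,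
`‖I_ρ − VᵀRRᵀV‖₂ ≤ ‖I_{ρ_B} − V_BᵀRRᵀV_B‖₂`. -/
theorem spec_error_mono_of_range_le
    (d ρ ρB r : ℕ)
    (V : Matrix (Fin d) (Fin ρ) ℝ) (VB : Matrix (Fin d) (Fin ρB) ℝ)
    (hV : Vᵀ * V = 1) (hVB : VBᵀ * VB = 1)
    (hrange : LinearMap.range V.mulVecLin ≤ LinearMap.range VB.mulVecLin)
    (R : Matrix (Fin d) (Fin r) ℝ) :
    specNorm ((1 : Matrix (Fin ρ) (Fin ρ) ℝ) - Vᵀ * R * Rᵀ * V)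
      ≤ specNorm ((1 : Matrix (Fin ρB) (Fin ρB) ℝ) - VBᵀ * R * Rᵀ * VB) := by
  obtain ⟨W, rfl⟩ : ∃ W : Matrix (Fin ρB) (Fin ρ) ℝ, V = VB * W := by
    refine ⟨VBᵀ * V, ?_⟩
    apply Matrix.ext_of_mulVec_single
    intro i
    obtain ⟨z, hz⟩ := hrange ⟨Pi.single i 1, rfl⟩
    simp only [mulVecLin_apply] at hz
    rw [← mulVec_mulVec, ← mulVec_mulVec, ← hz, mulVec_mulVec z VBᵀ VB, hVB, one_mulVec]
  have hW : Wᵀ * W = 1 := by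
    rw [transpose_mul, Matrix.mul_assoc, ← Matrix.mul_assoc VBᵀ, hVB, Matrix.one_mul] at hV
    exact hV
  have hA : (1 : Matrix (Fin ρ) (Fin ρ) ℝ) - (VB * W)ᵀ * R * Rᵀ * (VB * W)
      = Wᵀ * ((1 : Matrix (Fin ρB) (Fin ρB) ℝ) - VBᵀ * R * Rᵀ * VB) * W := by
    rw [Matrix.mul_sub, Matrix.sub_mul, Matrix.mul_one, hW, transpose_mul]
    simp only [Matrix.mul_assoc]
  rw [hA]
  refine Real.sSup_le ?_ (Real.sSup_nonneg ?_)
  · rintro c ⟨x, hx, rfl⟩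
    refine le_trans ?_ (le_csSup (bddAbove_specNorm _) ⟨W *ᵥ x, ?_, rfl⟩)
    · rw [← mulVec_mulVec, ← mulVec_mulVec, euclNorm_eq_sqrt_dot, euclNorm_eq_sqrt_dot]
      exact Real.sqrt_le_sqrt (dot_transpose_le W hW _)
    · rw [euclNorm_eq_sqrt_dot, dot_mulVec_self W hW, ← euclNorm_eq_sqrt_dot, hx]
  · rintro c ⟨x, hx, rfl⟩
    exact Real.sqrt_nonneg _
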